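/- Let C be a closed convex cone in a finite-dimensional real normed vector space V and let p ∈ rb(C^∨) (the relative boundary of the negative dual cone) be such that p is not identically zero on C. Then ⟨p, u⟩ < 0 for all u ∈ ri C, and there exists a nonzero u ∈ rb C with ⟨p, u⟩ = 0. -/

import Mathlib

open Set

variable {V : Type*} [NormedAddCommGroup V] [NormedSpace ℝ V]

/-- `C` is a closed convex cone (containing the origin). -/
def IsClosedConvexCone (C : Set V) : Prop :=
  (0 : V) ∈ C ∧ IsClosed C ∧ Convex ℝ C ∧ ∀ c : ℝ, 0 < c → ∀ x ∈ C, c • x ∈ C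

/-- A cone is salient if it contains no nonzero linear subspace,
equivalently it contains no pair `x, -x` with `x ≠ 0`. -/
def IsSalientCone (C : Set V) : Prop := ∀ x ∈ C, x ≠ 0 → -x ∉ C

/-- The relative boundary of a set: the set minus its relative (intrinsic) interior. -/
def relBoundary (C : Set V) : Set V := C \ intrinsicInterior ℝ C

/-- `a` is an antinorm associated with the cone `C` : it takes values in `ℝ ∪ {-∞}`,
is positive on the relative interior of `C`, vanishes on the relative boundary of `C`,
is `-∞` off `C`, is positively homogeneous and superadditive (concave). -/
def IsAntinorm (C : Set V) (a : V → EReal) : Prop :=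
  (∀ v, a v ≠ ⊤) ∧
  (∀ v ∈ intrinsicInterior ℝ C, 0 < a v) ∧
  (∀ v ∈ relBoundary C, a v = 0) ∧
  (∀ v, v ∉ C → a v = ⊥) ∧
  (∀ c : ℝ, 0 < c → ∀ v, a (c • v) = (c : EReal) * a v) ∧
  (∀ v w, a v + a w ≤ a (v + w))

/-- The negative dual cone `C^∨ = {p : ⟨p,u⟩ ≤ 0 ∀ u ∈ C}`. -/
def negDual (C : Set V) : Set (V →L[ℝ] ℝ) := {p | ∀ u ∈ C, p u ≤ 0}

/-- The antisphere of radius `r`. -/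
def antisphere (a : V → EReal) (r : ℝ) : Set V := {v | a v = (r : EReal)}

/-- The dual function `α^∨(p) = -sup_{v ∈ S₁} ⟨p, v⟩`. -/
noncomputable def dualFn (a : V → EReal) (p : V →L[ℝ] ℝ) : EReal :=
  - sSup ((fun v => ((p v : ℝ) : EReal)) '' antisphere a 1)

/-- `p^∨_r` : the set of maximizers of `v ↦ ⟨p, v⟩` over the antisphere `S_r`. -/
def maxSet (a : V → EReal) (p : V →L[ℝ] ℝ) (r : ℝ) : Set V :=
  {v ∈ antisphere a r | ∀ w ∈ antisphere a r, p w ≤ p v}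

/-- `p^∨ = ⋃_{r ≥ 0} p^∨_r`. -/
def pDual (a : V → EReal) (p : V →L[ℝ] ℝ) : Set V := ⋃ r ∈ Ici (0 : ℝ), maxSet a p r

/-!
A linear functional attaining its maximum over a set at a relative interior point is constant on
that set. Hence `p ∈ C^∨`, which is at most `0` on `C` and negative somewhere on it, is negative on
all of `ri C`, and every zero of `p` in `C` lies on `rb C`. If `p` had no nonzero zero in `C`,
compactness of the unit vectors of `C` would give `p u ≤ -ε ‖u‖` on `C` for some `ε > 0`, and this
leaves room for the whole `ε`-ball around `p` inside `C^∨`, so `p` would not be a boundary point.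
-/

open Topology

theorem eventually_lineMap_mem_of_mem_intrinsicInterior {R E P : Type*} [Ring R]
    [TopologicalSpace R] [AddCommGroup E] [Module R E] [TopologicalSpace E] [ContinuousSMul R E]
    [TopologicalSpace P] [AddTorsor E P] [IsTopologicalAddTorsor P] {s : Set P} {x y : P}
    (hx : x ∈ intrinsicInterior R s) (hy : y ∈ affineSpan R s) :
    ∀ᶠ t in 𝓝 (0 : R), AffineMap.lineMap x y t ∈ s := by
  obtain ⟨x, hx_int, rfl⟩ := mem_intrinsicInterior.1 hx
  let γ : R → affineSpan R s := fun t => ⟨AffineMap.lineMap (x : P) y t,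
    AffineMap.lineMap_mem t x.2 hy⟩
  have hγ : Continuous γ := AffineMap.lineMap_continuous.subtype_mk _
  have hγ_zero : γ 0 = x := Subtype.ext (AffineMap.lineMap_apply_zero _ _)
  exact (hγ.tendsto' 0 x hγ_zero).eventually (mem_interior_iff_mem_nhds.1 hx_int)

theorem eq_of_isMaxOn_of_mem_intrinsicInterior {E P : Type*} [AddCommGroup E] [Module ℝ E]
    [TopologicalSpace E] [ContinuousSMul ℝ E] [TopologicalSpace P] [AddTorsor E P]
    [IsTopologicalAddTorsor P] {f : P →ᵃ[ℝ] ℝ} {s : Set P} {x y : P} (hmax : IsMaxOn f s x)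
    (hx : x ∈ intrinsicInterior ℝ s) (hy : y ∈ affineSpan ℝ s) : f y = f x := by
  have hlocal : IsLocalMax (AffineMap.lineMap (f x) (f y) : ℝ → ℝ) 0 := by
    filter_upwards [eventually_lineMap_mem_of_mem_intrinsicInterior hx hy] with t ht
    rw [← f.apply_lineMap, AffineMap.lineMap_apply_zero]
    exact hmax ht
  exact sub_eq_zero.1 (hlocal.hasDerivAt_eq_zero AffineMap.hasDerivAt_lineMap)

theorem relBoundary_subset_frontier (s : Set V) : relBoundary s ⊆ frontier s :=
  fun _ hx => ⟨subset_closure hx.1, fun hx' => hx.2 (interior_subset_intrinsicInterior hx')⟩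

section NegDual

variable {C : Set V} {p : V →L[ℝ] ℝ}

theorem isClosed_negDual (C : Set V) : IsClosed (negDual C) := by
  simp only [negDual, ofPred_forall]
  exact isClosed_biInter fun u _ => isClosed_le (ContinuousLinearMap.apply ℝ ℝ u).continuous
    continuous_const

theorem apply_neg_of_mem_intrinsicInterior {u : V} (hp : p ∈ negDual C)
    (hpC : ∃ v ∈ C, p v ≠ 0) (hu : u ∈ intrinsicInterior ℝ C) : p u < 0 := by
  refine lt_of_le_of_ne (hp u (intrinsicInterior_subset hu)) fun hpu => ?_
  obtain ⟨v, hv, hpv⟩ := hpC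
  have hmax : IsMaxOn (p : V →ₗ[ℝ] ℝ).toAffineMap C u := fun w hw => (hp w hw).trans_eq hpu.symm
  exact hpv ((eq_of_isMaxOn_of_mem_intrinsicInterior hmax hu (subset_affineSpan ℝ C hv)).trans hpu)

theorem mem_interior_negDual_of_le_neg_mul_norm {ε : ℝ} (hε : 0 < ε)
    (hp : ∀ u ∈ C, p u ≤ -ε * ‖u‖) : p ∈ interior (negDual C) := by
  refine mem_interior.2 ⟨Metric.ball p ε, fun q hq u hu => ?_, Metric.isOpen_ball,
    Metric.mem_ball_self hε⟩
  calc
    q u = p u + (q - p) u := by simp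
    _ ≤ -ε * ‖u‖ + ε * ‖u‖ :=
      add_le_add (hp u hu) ((le_abs_self _).trans
        ((q - p).le_of_opNorm_le (mem_ball_iff_norm.1 hq).le u))
    _ = 0 := by ring

theorem exists_pos_forall_apply_le_neg_mul_norm [FiniteDimensional ℝ V] (hC : IsClosed C)
    (hsmul : ∀ c : ℝ, 0 < c → ∀ u ∈ C, c • u ∈ C) (hp : ∀ u ∈ C, u ≠ 0 → p u < 0) :
    ∃ ε > 0, ∀ u ∈ C, p u ≤ -ε * ‖u‖ := by
  have hcompact : IsCompact (C ∩ Metric.sphere 0 1) :=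
    have := FiniteDimensional.proper ℝ V
    (isCompact_sphere 0 1).inter_left hC
  obtain ⟨ε, hε, hle⟩ := hcompact.exists_forall_le' (f := fun u => -p u) (a := 0)
    p.continuous.neg.continuousOn
    fun u hu => neg_pos.2 (hp u hu.1 (ne_zero_of_mem_unit_sphere ⟨u, hu.2⟩))
  refine ⟨ε, hε, fun u hu => ?_⟩
  rcases eq_or_ne u 0 with rfl | hu0
  · simp
  have hnorm : 0 < ‖u‖ := norm_pos_iff.2 hu0
  have hunit : ‖u‖⁻¹ • u ∈ C ∩ Metric.sphere 0 1 :=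
    ⟨hsmul _ (inv_pos.2 hnorm) u hu, mem_sphere_zero_iff_norm.2 (norm_smul_inv_norm (𝕜 := ℝ) hu0)⟩
  have hpu : ‖u‖⁻¹ * p u ≤ -ε := by
    simpa only [map_smul, smul_eq_mul] using le_neg_of_le_neg (hle _ hunit)
  rwa [inv_mul_le_iff₀' hnorm] at hpu

theorem exists_ne_zero_apply_eq_zero_of_mem_frontier_negDual [FiniteDimensional ℝ V]
    (hC : IsClosed C) (hsmul : ∀ c : ℝ, 0 < c → ∀ u ∈ C, c • u ∈ C)
    (hp : p ∈ frontier (negDual C)) : ∃ u ∈ C, u ≠ 0 ∧ p u = 0 := by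
  by_contra! hne
  have hpC : p ∈ negDual C := (isClosed_negDual C).frontier_subset hp
  have hneg : ∀ u ∈ C, u ≠ 0 → p u < 0 := fun u hu hu0 => (hpC u hu).lt_of_ne (hne u hu hu0)
  obtain ⟨ε, hε, hle⟩ := exists_pos_forall_apply_le_neg_mul_norm hC hsmul hneg
  exact hp.2 (mem_interior_negDual_of_le_neg_mul_norm hε hle)

theorem statement7_general [FiniteDimensional ℝ V] (hC : IsClosed C)
    (hsmul : ∀ c : ℝ, 0 < c → ∀ u ∈ C, c • u ∈ C) (hp : p ∈ frontier (negDual C))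
    (hpz : ∃ u ∈ C, p u ≠ 0) :
    (∀ u ∈ intrinsicInterior ℝ C, p u < 0) ∧ ∃ u ∈ relBoundary C, u ≠ 0 ∧ p u = 0 := by
  have hneg : ∀ u ∈ intrinsicInterior ℝ C, p u < 0 := fun _ =>
    apply_neg_of_mem_intrinsicInterior ((isClosed_negDual C).frontier_subset hp) hpz
  obtain ⟨u, hu, hu0, hpu⟩ := exists_ne_zero_apply_eq_zero_of_mem_frontier_negDual hC hsmul hp
  exact ⟨hneg, u, ⟨hu, fun hri => (hneg u hri).ne hpu⟩, hu0, hpu⟩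

end NegDual

/-- For a closed convex cone `C` and `p` in the relative boundary of `C^∨`
which is not identically zero on `C`, one has `⟨p, u⟩ < 0` on the relative interior of `C`
and there is a nonzero `u` in the relative boundary of `C` with `⟨p, u⟩ = 0`. -/
theorem statement7 {V : Type*} [NormedAddCommGroup V] [NormedSpace ℝ V] [FiniteDimensional ℝ V]
    (C : Set V) (hC : IsClosedConvexCone C)
    (p : V →L[ℝ] ℝ) (hp : p ∈ relBoundary (negDual C)) (hpz : ∃ u ∈ C, p u ≠ 0) :
    (∀ u ∈ intrinsicInterior ℝ C, p u < 0) ∧ ∃ u ∈ relBoundary C, u ≠ 0 ∧ p u = 0 :=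
  statement7_general hC.2.1 hC.2.2.2 (relBoundary_subset_frontier _ hp) hpz
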